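/- arXiv:2003.14393 — 2 statements merged into one kernel-verified Lean document; each statement's English description precedes it below -/
import Mathlib

section
/- Let E be a finite-dimensional real inner product space and let f, g₁, g₂ : E → ℝ be continuously differentiable. Let (ηᵏ)_{k≥1} be a sequence of positive reals with ηᵏ⁺¹ ≤ ηᵏ and ηᵏ → 0, let (εᵏ)_{k≥1} be a sequence of nonnegative reals with εᵏ → 0, let (θᵏ)_{k≥0} be a sequence in the 2-simplex (θ₁ᵏ ≥ 0, θ₂ᵏ ≥ 0, θ₁ᵏ + θ₂ᵏ = 1), and let (yᵏ)_{k≥1} be a sequence in E such that for every k, ‖∇_y L_{ηᵏ}(yᵏ; θᵏ⁻¹)‖ ≤ εᵏ. Then for every cluster point y* of the sequence (yᵏ) there exists λ ∈ [0,1] such that ∇f(y*) + λ∇g₁(y*) + (1−λ)∇g₂(y*) = 0. -/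
open Real Filter Topology

/-!
By the chain rule the gradient of `L_η(·; θ)` at `y` is `∇f(y) + ∑ i, λ i • ∇g i (y)`, where `λ` is
the softmax of `g(y)/η` weighted by `θ`; in particular `λ` lies in the simplex, however small `η`
is. Pass to an ultrafilter along which the iterates converge to the cluster point; by compactness
of the simplex the multipliers converge along it too, and the gradient identity passes to the limit.
-/

section Simplex

lemma pos_of_mem_stdSimplex {ι 𝕜 : Type*} [Fintype ι] [Semiring 𝕜] [PartialOrder 𝕜] [Nontrivial 𝕜]
    {w : ι → 𝕜} (hw : w ∈ stdSimplex 𝕜 ι) : 0 < w :=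
  lt_of_le_of_ne hw.1 <| by
    rintro rfl
    simpa using hw.2

lemma vec_mem_stdSimplex_fin_two {𝕜 : Type*} [Semiring 𝕜] [PartialOrder 𝕜] {a b : 𝕜} :
    ![a, b] ∈ stdSimplex 𝕜 (Fin 2) ↔ 0 ≤ a ∧ 0 ≤ b ∧ a + b = 1 := by
  simp [stdSimplex, Fin.forall_fin_two, and_assoc]

lemma exists_mem_stdSimplex_fin_two {𝕜 : Type*} [Ring 𝕜] [PartialOrder 𝕜] [IsOrderedRing 𝕜]
    {P : (Fin 2 → 𝕜) → Prop} :
    (∃ w ∈ stdSimplex 𝕜 (Fin 2), P w) ↔ ∃ t ∈ Set.Icc (0 : 𝕜) 1, P ![t, 1 - t] := by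
  constructor
  · rintro ⟨w, hw, hP⟩
    have hw_eq : w = ![w 0, 1 - w 0] :=
      funext <| Fin.forall_fin_two.2 ⟨rfl, eq_sub_of_add_eq' <| by rw [← hw.2, Fin.sum_univ_two]⟩
    exact ⟨w 0, mem_Icc_of_mem_stdSimplex hw 0, by rwa [← hw_eq]⟩
  · rintro ⟨t, ht, hP⟩
    exact ⟨![t, 1 - t], vec_mem_stdSimplex_fin_two.2
      ⟨ht.1, sub_nonneg.2 ht.2, add_sub_cancel t 1⟩, hP⟩

end Simplex

section ClusterPoints

lemma mapClusterPt_atTop_nat_add {X : Type*} [TopologicalSpace X] {x : X} {u : ℕ → X} (n : ℕ) :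
    MapClusterPt x atTop (fun k => u (k + n)) ↔ MapClusterPt x atTop u := by
  rw [← Function.comp_def u (· + n), mapClusterPt_comp, map_add_atTop_eq_nat]

lemma exists_mem_eq_of_isCompact_of_tendsto {α X P F : Type*} [TopologicalSpace X]
    [TopologicalSpace P] [TopologicalSpace F] [T2Space F] {K : Set P} (hK : IsCompact K)
    {Φ : P × X → F} {x : X} (hΦ : ∀ p ∈ K, ContinuousAt Φ (p, x))
    {l : Filter α} [l.NeBot] {p : α → P} {y : α → X} {c : F}
    (hp : ∀ᶠ k in l, p k ∈ K) (hy : Tendsto y l (𝓝 x))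
    (hc : Tendsto (fun k => Φ (p k, y k)) l (𝓝 c)) :
    ∃ q ∈ K, Φ (q, x) = c := by
  have hU : ↑(Ultrafilter.of l) ≤ l := Ultrafilter.of_le l
  obtain ⟨q, hqK, hpq⟩ := hK.ultrafilter_le_nhds ((Ultrafilter.of l).map p)
    (le_principal_iff.2 (hU hp))
  exact ⟨q, hqK, tendsto_nhds_unique
    ((hΦ q hqK).tendsto.comp (Tendsto.prodMk_nhds hpq (hy.mono_left hU))) (hc.mono_left hU)⟩

end ClusterPoints

lemma continuousAt_gradient_of_contDiffAt {𝕜 E : Type*} [RCLike 𝕜] [NormedAddCommGroup E]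
    [InnerProductSpace 𝕜 E] [CompleteSpace E] {f : E → 𝕜} {x : E} (hf : ContDiffAt 𝕜 1 f x) :
    ContinuousAt (gradient f) x :=
  (InnerProductSpace.toDual 𝕜 E).symm.continuous.continuousAt.comp
    (hf.continuousAt_fderiv one_ne_zero)

section LogSumExp

variable {ι E : Type*} [Fintype ι]

/-- The probability vector proportional to `θ i * exp (u i)`: the softmax of `u` relative to the
prior weights `θ`. It provides the multipliers in the gradient of `smoothedObjective`. The prior
need not be normalized. -/
noncomputable def weightedSoftmax (θ u : ι → ℝ) (i : ι) : ℝ :=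
  θ i * Real.exp (u i) / ∑ j, θ j * Real.exp (u j)

/-- The objective `L_η(·; θ)`: the maximum in `f + max_i g i` is smoothed to a log-sum-exp with
temperature `η` and weights `θ`. It is meaningful for `η ≠ 0` only, since `x / 0 = 0`. -/
noncomputable def smoothedObjective (f : E → ℝ) (g : ι → E → ℝ) (η : ℝ) (θ : ι → ℝ) (z : E) : ℝ :=
  f z + η * Real.log (∑ i, θ i * Real.exp (g i z / η))

lemma smoothedObjective_fin_two (f g₁ g₂ : E → ℝ) (η a b : ℝ) :
    smoothedObjective f ![g₁, g₂] η ![a, b] = fun z =>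
      f z + η * Real.log (a * Real.exp (g₁ z / η) + b * Real.exp (g₂ z / η)) := by
  ext z
  simp [smoothedObjective]

lemma sum_mul_exp_pos {θ : ι → ℝ} (hθ : 0 < θ) (u : ι → ℝ) : 0 < ∑ i, θ i * Real.exp (u i) := by
  obtain ⟨hnonneg, i, hi⟩ := Pi.lt_def.1 hθ
  exact Finset.sum_pos' (fun j _ => mul_nonneg (hnonneg j) (Real.exp_nonneg _))
    ⟨i, Finset.mem_univ i, mul_pos hi (Real.exp_pos _)⟩

lemma weightedSoftmax_mem_stdSimplex {θ : ι → ℝ} (hθ : 0 < θ) (u : ι → ℝ) :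
    weightedSoftmax θ u ∈ stdSimplex ℝ ι := by
  have hsum := sum_mul_exp_pos hθ u
  refine ⟨fun i => div_nonneg (mul_nonneg (hθ.le i) (Real.exp_nonneg _)) hsum.le, ?_⟩
  simp only [weightedSoftmax, ← Finset.sum_div]
  exact div_self hsum.ne'

lemma hasFDerivAt_mul_log_sum_mul_exp_div [NormedAddCommGroup E] [NormedSpace ℝ E]
    {g : ι → E → ℝ} {g' : ι → E →L[ℝ] ℝ} {x : E} (hg : ∀ i, HasFDerivAt (g i) (g' i) x)
    {η : ℝ} (hη : η ≠ 0) {θ : ι → ℝ} (hθ : 0 < θ) :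
    HasFDerivAt (fun z => η * Real.log (∑ i, θ i * Real.exp (g i z / η)))
      (∑ i, weightedSoftmax θ (fun j => g j x / η) i • g' i) x := by
  have hsum : HasFDerivAt (fun z => ∑ i, θ i * Real.exp (g i z / η))
      (∑ i, θ i • Real.exp (g i x / η) • η⁻¹ • g' i) x :=
    HasFDerivAt.fun_sum fun i _ => by
      simpa only [div_eq_mul_inv] using (((hg i).mul_const η⁻¹).exp).const_mul (θ i)
  refine ((hsum.log (sum_mul_exp_pos hθ _).ne').const_mul η).congr_fderiv ?_
  simp only [Finset.smul_sum, smul_smul, weightedSoftmax]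
  refine Finset.sum_congr rfl fun i _ => ?_
  congr 1
  field_simp

variable [NormedAddCommGroup E] [InnerProductSpace ℝ E] [CompleteSpace E]

lemma hasGradientAt_smoothedObjective {f : E → ℝ} {g : ι → E → ℝ} {x f' : E} {g' : ι → E}
    (hf : HasGradientAt f f' x) (hg : ∀ i, HasGradientAt (g i) (g' i) x)
    {η : ℝ} (hη : η ≠ 0) {θ : ι → ℝ} (hθ : 0 < θ) :
    HasGradientAt (smoothedObjective f g η θ)
      (f' + ∑ i, weightedSoftmax θ (fun j => g j x / η) i • g' i) x := by
  rw [hasGradientAt_iff_hasFDerivAt]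
  simp only [map_add, map_sum, map_smul]
  exact hf.hasFDerivAt.add
    (hasFDerivAt_mul_log_sum_mul_exp_div (fun i => (hg i).hasFDerivAt) hη hθ)

end LogSumExp

theorem tron_convergence_inexact_minimization_general
    {α ι E : Type*} [Fintype ι] [NormedAddCommGroup E] [InnerProductSpace ℝ E] [CompleteSpace E]
    {f : E → ℝ} {g : ι → E → ℝ} {ystar : E}
    (hf : ContDiffAt ℝ 1 f ystar) (hg : ∀ i, ContDiffAt ℝ 1 (g i) ystar)
    {l : Filter α} {η : α → ℝ} (hη : ∀ k, η k ≠ 0) {θ : α → ι → ℝ} (hθ : ∀ k, 0 < θ k)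
    {y : α → E} (hy : MapClusterPt ystar l y)
    (hgrad : Tendsto (fun k => gradient (smoothedObjective f g (η k) (θ k)) (y k)) l (𝓝 0)) :
    ∃ w ∈ stdSimplex ℝ ι, gradient f ystar + ∑ i, w i • gradient (g i) ystar = 0 := by
  obtain ⟨U, hUl, hyU⟩ := mapClusterPt_iff_ultrafilter.1 hy
  have hdiff {h : E → ℝ} (hh : ContDiffAt ℝ 1 h ystar) :
      ∀ᶠ z in 𝓝 ystar, HasGradientAt h (gradient h z) z :=
    (hh.eventually (by simp)).mono fun z hz => (hz.differentiableAt one_ne_zero).hasGradientAt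
  have hgrad_eq : ∀ᶠ k in U, gradient (smoothedObjective f g (η k) (θ k)) (y k) =
      gradient f (y k) +
        ∑ i, weightedSoftmax (θ k) (fun j => g j (y k) / η k) i • gradient (g i) (y k) := by
    filter_upwards [hyU.eventually (hdiff hf),
      hyU.eventually (eventually_all.2 fun i => hdiff (hg i))] with k hfk hgk
    exact (hasGradientAt_smoothedObjective hfk hgk (hη k) (hθ k)).gradient
  have hcont (w : ι → ℝ) : ContinuousAt
      (fun q : (ι → ℝ) × E => gradient f q.2 + ∑ i, q.1 i • gradient (g i) q.2) (w, ystar) := by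
    have hf' := continuousAt_gradient_of_contDiffAt hf
    have hg' i := continuousAt_gradient_of_contDiffAt (hg i)
    fun_prop
  exact exists_mem_eq_of_isCompact_of_tendsto (isCompact_stdSimplex ℝ ι) (fun w _ => hcont w)
    (.of_forall fun k => weightedSoftmax_mem_stdSimplex (hθ k) _) hyU
    ((hgrad.mono_left hUl).congr' hgrad_eq)

/-- **Convergence under inexact minimization (Theorem 1).**
For continuously differentiable `f, g₁, g₂` on a finite-dimensional real inner
product space, a positive nonincreasing sequence `η k → 0`, nonnegative errors
`ε k → 0`, dual iterates `θ k` in the 2-simplex, and iterates `y k` with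
`‖∇ L_{η k}(y k; θ (k-1))‖ ≤ ε k`, every cluster point `y*` of `(y k)` satisfies
`∇f(y*) + λ ∇g₁(y*) + (1-λ) ∇g₂(y*) = 0` for some `λ ∈ [0,1]`. -/
theorem tron_convergence_inexact_minimization
    {E : Type*} [NormedAddCommGroup E] [InnerProductSpace ℝ E]
    [FiniteDimensional ℝ E]
    (f g₁ g₂ : E → ℝ)
    (hf : ContDiff ℝ 1 f) (hg₁ : ContDiff ℝ 1 g₁) (hg₂ : ContDiff ℝ 1 g₂)
    (η : ℕ → ℝ) (hηpos : ∀ k, 0 < η k)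
    (hηmono : ∀ k, η (k + 1) ≤ η k)
    (hηlim : Tendsto η atTop (𝓝 0))
    (ε : ℕ → ℝ) (hεnonneg : ∀ k, 0 ≤ ε k)
    (hεlim : Tendsto ε atTop (𝓝 0))
    (θ : ℕ → ℝ × ℝ)
    (hθ : ∀ k, 0 ≤ (θ k).1 ∧ 0 ≤ (θ k).2 ∧ (θ k).1 + (θ k).2 = 1)
    (y : ℕ → E)
    (hy : ∀ k : ℕ,
      ‖gradient (fun z : E => f z + η (k + 1) *
        Real.log ((θ k).1 * Real.exp (g₁ z / η (k + 1)) +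
                  (θ k).2 * Real.exp (g₂ z / η (k + 1)))) (y (k + 1))‖
        ≤ ε (k + 1))
    (ystar : E)
    (hcluster : ∃ φ : ℕ → ℕ, StrictMono φ ∧ Tendsto (y ∘ φ) atTop (𝓝 ystar)) :
    ∃ lam : ℝ, lam ∈ Set.Icc (0 : ℝ) 1 ∧
      gradient f ystar + lam • gradient g₁ ystar +
        (1 - lam) • gradient g₂ ystar = 0 := by
  obtain ⟨φ, hφ, hlim⟩ := hcluster
  have hy_cluster : MapClusterPt ystar atTop y := .of_comp hφ.tendsto_atTop hlim.mapClusterPt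
  have hgrad_lim : Tendsto (fun k => gradient (smoothedObjective f ![g₁, g₂] (η (k + 1))
      ![(θ k).1, (θ k).2]) (y (k + 1))) atTop (𝓝 0) :=
    squeeze_zero_norm (by simpa only [smoothedObjective_fin_two] using hy)
      ((tendsto_add_atTop_iff_nat 1).2 hεlim)
  obtain ⟨lam, hlam, hstat⟩ := exists_mem_stdSimplex_fin_two.1 <|
    tron_convergence_inexact_minimization_general hf.contDiffAt
      (Fin.forall_fin_two.2 ⟨hg₁.contDiffAt, hg₂.contDiffAt⟩) (fun k => (hηpos (k + 1)).ne')
      (fun k => pos_of_mem_stdSimplex (vec_mem_stdSimplex_fin_two.2 (hθ k)))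
      ((mapClusterPt_atTop_nat_add 1).2 hy_cluster) hgrad_lim
  exact ⟨lam, hlam, by simpa [← add_assoc] using hstat⟩
end

section
/- Let E be a finite-dimensional real inner product space, g₁, g₂ : E → ℝ continuous, (ηᵏ) a sequence of positive reals with ηᵏ → 0, (θᵏ) a sequence in the 2-simplex, and (yᵏ) a sequence in E converging to y*. Define λₖ = θ₁ᵏ⁻¹ · exp(g₁(yᵏ)/ηᵏ) / (θ₁ᵏ⁻¹ · exp(g₁(yᵏ)/ηᵏ) + θ₂ᵏ⁻¹ · exp(g₂(yᵏ)/ηᵏ)). If g₁(y*) > g₂(y*) and there exists C ≥ 0 such that θ₂ᵏ ≤ C · θ₁ᵏ for all k, then λₖ → 1. Symmetrically, if g₁(y*) < g₂(y*) and there exists C ≥ 0 such that θ₁ᵏ ≤ C · θ₂ᵏ for all k, then λₖ → 0. -/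
open Real Filter Topology

open Asymptotics

/-! With `a = θ₁ exp (g₁ / η)` and `b = θ₂ exp (g₂ / η)`, the weight is `a / (a + b)`. The gap
between the exponents stays away from `0` while it is divided by `η → 0⁺`, so the exponential of the
smaller one is negligible against the other. A bounded ratio of the prefactors cannot undo this:
either `b = o(a)` and the weight tends to `1`, or `a = o(b)` and it tends to `0`. -/

section Ratio

variable {ι 𝕜 : Type*} [NormedField 𝕜] {l : Filter ι} {f g : ι → 𝕜}

lemma tendsto_div_add_nhds_zero_of_isLittleO (h : f =o[l] g) :
    Tendsto (fun k => f k / (f k + g k)) l (𝓝 0) :=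
  (h.trans_isBigO h.right_isBigO_add).tendsto_div_nhds_zero

lemma tendsto_div_add_nhds_one_of_isLittleO (hf : ∀ᶠ k in l, f k ≠ 0) (h : g =o[l] f) :
    Tendsto (fun k => f k / (f k + g k)) l (𝓝 1) := by
  have hequiv : (f + g) ~[l] f := IsEquivalent.refl.add_isLittleO h
  have hinv : Tendsto (fun k => ((f k + g k) / f k)⁻¹) l (𝓝 1⁻¹) :=
    ((isEquivalent_iff_tendsto_one hf).1 hequiv).inv₀ one_ne_zero
  simpa only [inv_div, inv_one] using hinv

end Ratio

lemma isLittleO_exp_div_of_lt {ι : Type*} {l : Filter ι} {u v η : ι → ℝ} {U V : ℝ}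
    (hη : Tendsto η l (𝓝[>] 0)) (hu : Tendsto u l (𝓝 U)) (hv : Tendsto v l (𝓝 V)) (hUV : U < V) :
    (fun k => exp (u k / η k)) =o[l] fun k => exp (v k / η k) := by
  rw [isLittleO_exp_comp_exp_comp]
  have hgap : Tendsto (fun k => (v k - u k) * (η k)⁻¹) l atTop :=
    (hv.sub hu).pos_mul_atTop (sub_pos.2 hUV) (tendsto_inv_nhdsGT_zero.comp hη)
  simpa only [← div_eq_mul_inv, sub_div] using hgap

lemma isBigO_of_nonneg_of_le_const_mul {ι : Type*} {l : Filter ι} {f g : ι → ℝ} {C : ℝ}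
    (hf : ∀ᶠ k in l, 0 ≤ f k) (hfg : ∀ᶠ k in l, f k ≤ C * g k) : f =O[l] g := by
  refine .of_bound |C| ?_
  filter_upwards [hf, hfg] with k hk hle
  calc ‖f k‖ = f k := norm_of_nonneg hk
    _ ≤ C * g k := hle
    _ ≤ |C * g k| := le_abs_self _
    _ = |C| * ‖g k‖ := abs_mul _ _

theorem tron_lambda_limit_general {ι E : Type*} [TopologicalSpace E] {l : Filter ι}
    {g₁ g₂ : E → ℝ} {η : ι → ℝ} {θ : ι → ℝ × ℝ} {y : ι → E} {ystar : E} {lam : ι → ℝ}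
    (hg₁ : ContinuousAt g₁ ystar) (hg₂ : ContinuousAt g₂ ystar)
    (hη : Tendsto η l (𝓝[>] 0)) (hθ : ∀ᶠ k in l, θ k ≠ 0) (hy : Tendsto y l (𝓝 ystar))
    (hlam : ∀ k, lam k =
      (θ k).1 * exp (g₁ (y k) / η k) /
        ((θ k).1 * exp (g₁ (y k) / η k) + (θ k).2 * exp (g₂ (y k) / η k))) :
    (g₂ ystar < g₁ ystar → (fun k => (θ k).2) =O[l] (fun k => (θ k).1) →
      Tendsto lam l (𝓝 1)) ∧
    (g₁ ystar < g₂ ystar → (fun k => (θ k).1) =O[l] (fun k => (θ k).2) →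
      Tendsto lam l (𝓝 0)) := by
  have h₁ : Tendsto (fun k => g₁ (y k)) l (𝓝 (g₁ ystar)) := hg₁.tendsto.comp hy
  have h₂ : Tendsto (fun k => g₂ (y k)) l (𝓝 (g₂ ystar)) := hg₂.tendsto.comp hy
  rw [funext hlam]
  refine ⟨fun hlt hO => ?_, fun hlt hO => ?_⟩
  · have hθ₁ : ∀ᶠ k in l, (θ k).1 ≠ 0 := by
      filter_upwards [hθ, hO.eq_zero_imp] with k hk himp h0
      exact hk (Prod.ext h0 (himp h0))
    exact tendsto_div_add_nhds_one_of_isLittleO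
      (hθ₁.mono fun k hk => mul_ne_zero hk (exp_ne_zero _))
      (hO.mul_isLittleO (isLittleO_exp_div_of_lt hη h₂ h₁ hlt))
  · exact tendsto_div_add_nhds_zero_of_isLittleO
      (hO.mul_isLittleO (isLittleO_exp_div_of_lt hη h₁ h₂ hlt))

/-- **Limits of the smoothing weights `λₖ`.** With `η k → 0⁺`, `θ k` in the
2-simplex and `y k → y*`, the weight
`λₖ = θ₁ᵏ exp(g₁(yᵏ)/ηᵏ) / (θ₁ᵏ exp(g₁(yᵏ)/ηᵏ) + θ₂ᵏ exp(g₂(yᵏ)/ηᵏ))`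
tends to `1` if `g₁(y*) > g₂(y*)` (assuming `θ₂ᵏ ≤ C θ₁ᵏ`), and
tends to `0` if `g₁(y*) < g₂(y*)` (assuming `θ₁ᵏ ≤ C θ₂ᵏ`). -/
theorem tron_lambda_limit
    {E : Type*} [NormedAddCommGroup E] [InnerProductSpace ℝ E]
    [FiniteDimensional ℝ E]
    (g₁ g₂ : E → ℝ) (hg₁ : Continuous g₁) (hg₂ : Continuous g₂)
    (η : ℕ → ℝ) (hηpos : ∀ k, 0 < η k)
    (hηlim : Tendsto η atTop (𝓝 0))
    (θ : ℕ → ℝ × ℝ)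
    (hθ : ∀ k, 0 ≤ (θ k).1 ∧ 0 ≤ (θ k).2 ∧ (θ k).1 + (θ k).2 = 1)
    (y : ℕ → E) (ystar : E)
    (hy : Tendsto y atTop (𝓝 ystar))
    (lam : ℕ → ℝ)
    (hlam : ∀ k, lam k =
      (θ k).1 * Real.exp (g₁ (y k) / η k) /
        ((θ k).1 * Real.exp (g₁ (y k) / η k) +
         (θ k).2 * Real.exp (g₂ (y k) / η k))) :
    (g₁ ystar > g₂ ystar → (∃ C : ℝ, 0 ≤ C ∧ ∀ k, (θ k).2 ≤ C * (θ k).1) →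
      Tendsto lam atTop (𝓝 1)) ∧
    (g₁ ystar < g₂ ystar → (∃ C : ℝ, 0 ≤ C ∧ ∀ k, (θ k).1 ≤ C * (θ k).2) →
      Tendsto lam atTop (𝓝 0)) := by
  have hη : Tendsto η atTop (𝓝[>] 0) := tendsto_nhdsWithin_iff.2 ⟨hηlim, .of_forall hηpos⟩
  have hθ_ne : ∀ k, θ k ≠ 0 := fun k h0 => by simpa [h0] using (hθ k).2.2
  have hlimits := tron_lambda_limit_general hg₁.continuousAt hg₂.continuousAt hη
    (.of_forall hθ_ne) hy hlam
  exact ⟨fun hlt ⟨_, _, hC⟩ => hlimits.1 hlt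
      (isBigO_of_nonneg_of_le_const_mul (.of_forall fun k => (hθ k).2.1) (.of_forall hC)),
    fun hlt ⟨_, _, hC⟩ => hlimits.2 hlt
      (isBigO_of_nonneg_of_le_const_mul (.of_forall fun k => (hθ k).1) (.of_forall hC))⟩
end
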